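/- Let n ≥ 1, let U ⊆ ℝⁿ be an open set, let x₀ ∈ U, and let Γ : Fin n → (U → Matrix n ℝ) be smooth and curvature-free on U, i.e. ∂_k Γ_l − ∂_l Γ_k + Γ_k·Γ_l − Γ_l·Γ_k = 0 on U for all k, l. Then there exist an open neighborhood V ⊆ U of x₀ and a smooth map A : V → Matrix n ℝ such that A x is invertible for every x ∈ V and ∂_k A x = −(Γ k x)·(A x) for every x ∈ V and every k. (A flat linear connection admits a local frame in which its components vanish.) -/

import Mathlib

attribute [local instance] Matrix.normedAddCommGroup Matrix.normedSpace

section ParallelTransport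

open Set Metric Topology

set_option maxSynthPendingDepth 3

variable {E M : Type*} [NormedAddCommGroup E] [NormedSpace ℝ E]
  [NormedAddCommGroup M] [NormedSpace ℝ M]

/-- A `C²` function has a locally uniform second order Taylor estimate. -/
lemma ContDiffAt.exists_ball_norm_taylor_le {f : E → M} {p : E} (hf : ContDiffAt ℝ 2 f p) :
    ∃ C : ℝ, 1 ≤ C ∧ ∃ R > 0, ∀ x ∈ ball p R,
      DifferentiableAt ℝ f x ∧ ‖f x‖ ≤ C ∧ ‖fderiv ℝ f x‖ ≤ C ∧
      ∀ y ∈ ball p R, ‖f y - f x - fderiv ℝ f x (y - x)‖ ≤ C * ‖y - x‖ ^ 2 := by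
  have hf' : ContDiffAt ℝ 1 (fderiv ℝ f) p := hf.fderiv_right (by norm_num)
  obtain ⟨K, s, hs, hK⟩ := hf'.exists_lipschitzOnWith
  have hdiff : ∀ᶠ x in 𝓝 p, DifferentiableAt ℝ f x :=
    (hf.eventually (by simp)).mono fun x hx ↦ hx.differentiableAt (by simp)
  have hbound : ∀ᶠ x in 𝓝 p, ‖f x‖ < ‖f p‖ + 1 :=
    hf.continuousAt.norm.eventually_lt_const (by linarith)
  have hbound' : ∀ᶠ x in 𝓝 p, ‖fderiv ℝ f x‖ < ‖fderiv ℝ f p‖ + 1 :=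
    hf'.continuousAt.norm.eventually_lt_const (by linarith)
  obtain ⟨R, hR, hball⟩ :=
    Metric.eventually_nhds_iff_ball.1 (hdiff.and (hbound.and (hbound'.and hs)))
  have h₁ := norm_nonneg (f p)
  have h₂ := norm_nonneg (fderiv ℝ f p)
  have h₃ := K.coe_nonneg
  refine ⟨‖f p‖ + ‖fderiv ℝ f p‖ + K + 1, by linarith, R, hR, fun x hx ↦
    ⟨(hball x hx).1, by linarith [(hball x hx).2.1], by linarith [(hball x hx).2.2.1],
      fun y hy ↦ ?_⟩⟩
  have hseg : segment ℝ x y ⊆ ball p R := (convex_ball p R).segment_subset hx hy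
  have key := (convex_segment x y).norm_image_sub_le_of_norm_fderiv_le' (𝕜 := ℝ) (f := f)
    (φ := fderiv ℝ f x) (C := K * ‖y - x‖) (fun z hz ↦ (hball z (hseg hz)).1)
    (fun z hz ↦ ?_) (left_mem_segment ℝ x y) (right_mem_segment ℝ x y)
  · refine key.trans ?_
    nlinarith [sq_nonneg ‖y - x‖]
  · refine (hK.norm_sub_le (hball z (hseg hz)).2.2.2 (hball x hx).2.2.2).trans ?_
    gcongr
    exact norm_sub_le_of_mem_segment hz

/-- The defect with which `φ - t • a h φ` solves the transport equation in direction `u + h`,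
when `φ` solves the one in direction `u`, is of second order in `h` for a flat connection. -/
lemma norm_transport_defect_le {a b : E →L[ℝ] M →L[ℝ] M} {D : E →L[ℝ] E →L[ℝ] M →L[ℝ] M}
    {u h : E} {φ : M} {t B C : ℝ} (hC : 0 ≤ C) (ht₀ : 0 ≤ t) (ht₁ : t ≤ 1)
    (ha : ‖a‖ ≤ C) (hD : ‖D‖ ≤ C) (hb : ‖b - a - D (t • h)‖ ≤ C * ‖t • h‖ ^ 2)
    (hφ : ‖φ‖ ≤ B) (huh : ‖u + h‖ ≤ 1) (hh : ‖h‖ ≤ 2)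
    (hflat : D u h - D h u + (a u).comp (a h) - (a h).comp (a u) = 0) :
    ‖(-(a u φ) - (a h φ + t • D u h φ - t • a h (a u φ))) + b (u + h) (φ - t • a h φ)‖
      ≤ (4 * C ^ 2 + 2 * C) * B * ‖h‖ ^ 2 := by
  have hB : 0 ≤ B := (norm_nonneg _).trans hφ
  have hflat' : D u h φ = D h u φ - a u (a h φ) + a h (a u φ) := by
    have := DFunLike.congr_fun hflat φ
    simp only [_root_.add_apply, _root_.sub_apply,
      ContinuousLinearMap.comp_apply, _root_.zero_apply] at this
    rw [← sub_eq_zero, ← this]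
    abel
  have hb' : ‖b - a - D (t • h)‖ ≤ C * ‖h‖ ^ 2 := by
    refine hb.trans ?_
    rw [norm_smul, Real.norm_of_nonneg ht₀]
    gcongr
    exact mul_le_of_le_one_left (norm_nonneg _) ht₁
  have hah : ‖a h φ‖ ≤ C * ‖h‖ * B := (a h).le_of_opNorm_le_of_le (a.le_of_opNorm_le ha h) hφ
  have e₁ : ‖t • a h (a h φ)‖ ≤ C ^ 2 * B * ‖h‖ ^ 2 := by
    rw [norm_smul, Real.norm_of_nonneg ht₀]
    calc t * ‖a h (a h φ)‖ ≤ 1 * (C * ‖h‖ * (C * ‖h‖ * B)) := by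
          gcongr
          exact (a h).le_of_opNorm_le_of_le (a.le_of_opNorm_le ha h) hah
      _ = _ := by ring
  have e₂ : ‖t • D h h φ‖ ≤ C * B * ‖h‖ ^ 2 := by
    rw [norm_smul, Real.norm_of_nonneg ht₀]
    calc t * ‖D h h φ‖ ≤ 1 * (C * ‖h‖ * ‖h‖ * B) := by
          gcongr
          exact (D h h).le_of_opNorm_le_of_le
            ((D h).le_of_opNorm_le (D.le_of_opNorm_le hD h) h) hφ
      _ = _ := by ring
  have e₃ : ‖(t * t) • D h (u + h) (a h φ)‖ ≤ C ^ 2 * B * ‖h‖ ^ 2 := by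
    rw [norm_smul, Real.norm_of_nonneg (mul_nonneg ht₀ ht₀)]
    calc t * t * ‖D h (u + h) (a h φ)‖ ≤ 1 * 1 * (C * ‖h‖ * 1 * (C * ‖h‖ * B)) := by
          gcongr
          exact (D h (u + h)).le_of_opNorm_le_of_le
            ((D h).le_of_opNorm_le_of_le (D.le_of_opNorm_le hD h) huh) hah
      _ = _ := by ring
  have e₄ : ‖(b - a - D (t • h)) (u + h) (φ - t • a h φ)‖
      ≤ (2 * C ^ 2 + C) * B * ‖h‖ ^ 2 := by
    have hψ : ‖φ - t • a h φ‖ ≤ B + 1 * (C * 2 * B) := by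
      refine (norm_sub_le _ _).trans (add_le_add hφ ?_)
      rw [norm_smul, Real.norm_of_nonneg ht₀]
      gcongr
      exact hah.trans (by gcongr)
    refine (ContinuousLinearMap.le_of_opNorm_le_of_le _
      (ContinuousLinearMap.le_of_opNorm_le_of_le _ hb' huh) hψ).trans (le_of_eq ?_)
    ring
  have hsplit : (-(a u φ) - (a h φ + t • D u h φ - t • a h (a u φ)))
        + b (u + h) (φ - t • a h φ)
      = -(t • a h (a h φ)) + t • D h h φ - (t * t) • D h (u + h) (a h φ)
        + (b - a - D (t • h)) (u + h) (φ - t • a h φ) := by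
    rw [hflat']
    simp only [_root_.sub_apply, _root_.add_apply, map_add, map_sub,
      map_smul, _root_.smul_apply]
    module
  rw [hsplit]
  refine (norm_add_le _ _).trans ((add_le_add ((norm_sub_le _ _).trans (add_le_add
    ((norm_add_le _ _).trans (add_le_add ((norm_neg _).trans_le e₁) e₂)) e₃)) e₄).trans
      (le_of_eq ?_))
  ring

/-- Parallel transport along a short segment exists. -/
lemma exists_radial_transport [CompleteSpace M] {ω : E → E →L[ℝ] M →L[ℝ] M} {p u : E}
    {C : ℝ} (hcont : ∀ t ∈ Icc (0 : ℝ) 1, ContinuousAt ω (p + t • u))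
    (hC : ∀ t ∈ Icc (0 : ℝ) 1, ‖ω (p + t • u)‖ ≤ C) (m : M) (hu : C * ‖u‖ * (‖m‖ + 1) ≤ 1) :
    ∃ φ : ℝ → M, φ 0 = m ∧ ∀ t ∈ Icc (0 : ℝ) 1,
      HasDerivWithinAt φ (-(ω (p + t • u) u (φ t))) (Icc 0 1) t := by
  have hC₀ : 0 ≤ C := (norm_nonneg _).trans (hC 0 (by simp))
  have hop : ∀ t ∈ Icc (0 : ℝ) 1, ‖-(ω (p + t • u) u)‖ ≤ C * ‖u‖ := fun t ht ↦ by
    rw [norm_neg]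
    exact (ω (p + t • u)).le_of_opNorm_le (hC t ht) u
  have hPL : IsPicardLindelof (fun t x ↦ -(ω (p + t • u) u x))
      (⟨0, by simp⟩ : Icc (0 : ℝ) 1) m 1 0 1 (Real.toNNReal (C * ‖u‖)) := by
    refine ⟨fun t ht ↦ ?_, fun x hx t ht ↦ ?_, fun t ht x hx ↦ ?_, by simp⟩
    · refine LipschitzWith.lipschitzOnWith ((-(ω (p + t • u) u)).lipschitz.weaken ?_)
      exact NNReal.le_toNNReal_of_coe_le (hop t ht)
    · have hline : ContinuousAt (fun s : ℝ ↦ p + s • u) t := by fun_prop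
      have := (hcont t ht).comp (f := fun s : ℝ ↦ p + s • u) hline
      exact (((this.clm_apply continuousAt_const).clm_apply
        continuousAt_const).neg).continuousWithinAt
    · have hx' : ‖x‖ ≤ ‖m‖ + 1 := by
        have := norm_le_norm_add_norm_sub' x m
        have hx := mem_closedBall_iff_norm.1 hx
        simp only [NNReal.coe_one] at hx
        linarith
      refine ((-(ω (p + t • u) u)).le_of_opNorm_le_of_le (hop t ht) hx').trans ?_
      simpa using hu
  exact hPL.exists_eq_forall_mem_Icc_hasDerivWithinAt₀

/-- A flat `C²` connection form `ω`, with values in the endomorphisms of a Banach space, has a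
local parallel section with prescribed value at a point. -/
theorem exists_parallel_section [CompleteSpace M] {ω : E → E →L[ℝ] M →L[ℝ] M} {p : E}
    (hω : ContDiffAt ℝ 2 ω p)
    (hflat : ∀ᶠ x in 𝓝 p, ∀ u v, fderiv ℝ ω x u v - fderiv ℝ ω x v u
      + (ω x u).comp (ω x v) - (ω x v).comp (ω x u) = 0) (m : M) :
    ∃ A : E → M, A p = m ∧ ∀ᶠ x in 𝓝 p, HasFDerivAt A (-(ω x).flip (A x)) x := by
  obtain ⟨C, hC, R, hR, hball⟩ := hω.exists_ball_norm_taylor_le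
  obtain ⟨R', hR', hflat⟩ := Metric.eventually_nhds_iff_ball.1 hflat
  have hC₀ : 0 < C := by linarith
  have hm := norm_nonneg m
  obtain ⟨r, hr, hrR, hrR', hr₁, hrC⟩ : ∃ r > 0, r ≤ R ∧ r ≤ R' ∧ r ≤ 1 ∧
      C * r * (‖m‖ + 1) ≤ 1 := by
    refine ⟨min (min R R') (min 1 (1 / (C * (‖m‖ + 1)))), by positivity, by simp, by simp,
      by simp, ?_⟩
    calc _ ≤ C * (1 / (C * (‖m‖ + 1))) * (‖m‖ + 1) := by
          gcongr
          exact (min_le_right _ _).trans (min_le_right _ _)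
      _ = 1 := by field_simp
  have hmem : ∀ u : E, ‖u‖ < r → ∀ t ∈ Icc (0 : ℝ) 1, p + t • u ∈ ball p r := by
    intro u hu t ht
    rw [mem_ball_iff_norm, add_sub_cancel_left, norm_smul, Real.norm_of_nonneg ht.1]
    exact (mul_le_of_le_one_left (norm_nonneg _) ht.2).trans_lt hu
  have hmemR u hu t ht := ball_subset_ball hrR (hmem u hu t ht)
  have hex : ∀ u : E, ∃ φ : ℝ → M, ‖u‖ < r → φ 0 = m ∧ ∀ t ∈ Icc (0 : ℝ) 1,
      HasDerivWithinAt φ (-(ω (p + t • u) u (φ t))) (Icc 0 1) t := by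
    intro u
    by_cases hu : ‖u‖ < r
    · obtain ⟨φ, hφ⟩ := exists_radial_transport (ω := ω) (p := p) (u := u) (C := C)
        (fun t ht ↦ (hball _ (hmemR u hu t ht)).1.continuousAt)
        (fun t ht ↦ (hball _ (hmemR u hu t ht)).2.1) m (le_trans (by gcongr) hrC)
      exact ⟨φ, fun _ ↦ hφ⟩
    · exact ⟨0, fun h ↦ absurd h hu⟩
  choose φ hφ using hex
  refine ⟨fun x ↦ φ (x - p) 1, ?_, ?_⟩
  · obtain ⟨h0, hd⟩ := hφ 0 (by simpa using hr)
    have hconst := constant_of_derivWithin_zero (f := φ 0) (a := 0) (b := 1)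
      (fun t ht ↦ (hd t ht).differentiableWithinAt) (fun t ht ↦ by
        have ht' := Ico_subset_Icc_self ht
        rw [(hd t ht').derivWithin (uniqueDiffOn_Icc one_pos t ht')]
        simp)
    simpa [h0] using hconst 1 (by simp)
  filter_upwards [ball_mem_nhds p hr] with x hx
  obtain ⟨u, rfl⟩ : ∃ u, x = p + u := ⟨x - p, by abel⟩
  have hu : ‖u‖ < r := by simpa [mem_ball_iff_norm] using hx
  obtain ⟨h0, hd⟩ := hφ u hu
  have hφcont : ContinuousOn (φ u) (Icc 0 1) := fun t ht ↦ (hd t ht).continuousWithinAt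
  obtain ⟨B, hB⟩ := isCompact_Icc.exists_bound_of_continuousOn hφcont
  have hest : ∀ h : E, ‖u + h‖ < r →
      ‖φ (u + h) 1 - φ u 1 + ω (p + u) h (φ u 1)‖
        ≤ ((4 * C ^ 2 + 2 * C) * B / C * (Real.exp C - 1)) * ‖h‖ ^ 2 := by
    intro h huh
    obtain ⟨h0', hd'⟩ := hφ (u + h) huh
    have hh : ‖h‖ ≤ 2 := by
      have := norm_sub_le (u + h) u
      rw [add_sub_cancel_left] at this
      linarith
    have hψ : ∀ t ∈ Icc (0 : ℝ) 1, HasDerivWithinAt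
        (fun t ↦ φ u t - t • ω (p + t • u) h (φ u t))
        (-(ω (p + t • u) u (φ u t)) - (ω (p + t • u) h (φ u t)
          + t • fderiv ℝ ω (p + t • u) u h (φ u t)
          - t • ω (p + t • u) h (ω (p + t • u) u (φ u t)))) (Icc 0 1) t := by
      intro t ht
      have hline : HasDerivWithinAt (fun s : ℝ ↦ p + s • u) u (Icc 0 1) t := by
        simpa using (((hasDerivAt_id t).smul_const u).const_add p).hasDerivWithinAt
      have hω' := (hball _ (hmemR u hu t ht)).1.hasFDerivAt.comp_hasDerivWithinAt t hline
      have hωh := (hω'.clm_apply (hasDerivWithinAt_const t _ h)).clm_apply (hd t ht)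
      convert! (hd t ht).sub ((hasDerivWithinAt_id t _).smul hωh) using 1
      simp
      abel
    have hIci : ∀ {f : ℝ → M} {f' : M} {t : ℝ}, t ∈ Ico (0 : ℝ) 1 →
        HasDerivWithinAt f f' (Icc 0 1) t → HasDerivWithinAt f f' (Ici t) t :=
      fun ht hf ↦ hf.mono_of_mem_nhdsWithin (Icc_mem_nhdsGE_of_mem ht)
    have hgron := dist_le_of_approx_trajectories_ODE_of_mem (a := 0) (b := 1)
      (v := fun t y ↦ -(ω (p + t • (u + h)) (u + h) y)) (s := fun _ ↦ univ)
      (K := C.toNNReal) (δ := 0) (εf := 0) (εg := (4 * C ^ 2 + 2 * C) * B * ‖h‖ ^ 2)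
      (fun t ht ↦ ?_) (fun t ht ↦ (hd' t ht).continuousWithinAt)
      (fun t ht ↦ hIci ht (hd' t (Ico_subset_Icc_self ht))) (fun t ht ↦ (dist_self _).le)
      (fun _ _ ↦ mem_univ _) (fun t ht ↦ (hψ t ht).continuousWithinAt)
      (fun t ht ↦ hIci ht (hψ t (Ico_subset_Icc_self ht))) (fun t ht ↦ ?_)
      (fun _ _ ↦ mem_univ _) (by simp [h0, h0']) 1 (by simp)
    · rw [gronwallBound_of_K_ne_0 (by simpa using hC₀), dist_eq_norm,
        Real.coe_toNNReal _ hC₀.le] at hgron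
      simp only [one_smul, sub_zero, mul_one, zero_mul, zero_add] at hgron
      rw [← sub_add] at hgron
      exact hgron.trans (le_of_eq (by ring))
    · have ht := Ico_subset_Icc_self ht
      refine LipschitzWith.lipschitzOnWith
        ((-(ω (p + t • (u + h)) (u + h))).lipschitz.weaken ?_)
      refine NNReal.le_toNNReal_of_coe_le ?_
      rw [coe_nnnorm, norm_neg]
      exact ((ω (p + t • (u + h))).le_of_opNorm_le_of_le
        (hball _ (hmemR _ huh t ht)).2.1 (huh.le.trans hr₁)).trans (mul_one C).le
    · have ht := Ico_subset_Icc_self ht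
      obtain ⟨-, ha, hD, htaylor⟩ := hball _ (hmemR u hu t ht)
      have hb := htaylor _ (hmemR _ huh t ht)
      rw [show p + t • (u + h) - (p + t • u) = t • h by module] at hb
      rw [dist_eq_norm, sub_neg_eq_add]
      exact norm_transport_defect_le hC₀.le ht.1 ht.2 ha hD hb (hB t ht) (huh.le.trans hr₁) hh
        (hflat _ (ball_subset_ball hrR' (hmem u hu t ht)) u h)
  rw [hasFDerivAt_iff_isLittleO_nhds_zero]
  have hO : (fun h ↦ φ (p + u + h - p) 1 - φ (p + u - p) 1
      - (-(ω (p + u)).flip (φ (p + u - p) 1)) h) =O[𝓝 0] fun h : E ↦ ‖h‖ ^ 2 := by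
    refine Asymptotics.IsBigO.of_bound ((4 * C ^ 2 + 2 * C) * B / C * (Real.exp C - 1)) ?_
    have hnear : ∀ᶠ h in 𝓝 (0 : E), ‖u + h‖ < r := by
      have hcont : ContinuousAt (fun h : E ↦ ‖u + h‖) 0 := by fun_prop
      exact hcont.eventually_lt_const (by simpa using hu)
    filter_upwards [hnear] with h huh
    rw [add_assoc, add_sub_cancel_left, add_sub_cancel_left, Real.norm_of_nonneg (sq_nonneg _)]
    simpa using hest h huh
  refine hO.trans_isLittleO ?_
  simpa using Asymptotics.isLittleO_norm_pow_id (E' := E) one_lt_two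

/-- A parallel section of a smooth connection form is smooth. -/
lemma contDiffOn_of_hasFDerivAt_parallel {ω : E → E →L[ℝ] M →L[ℝ] M} {V : Set E}
    (hV : IsOpen V) (hω : ContDiffOn ℝ (⊤ : ℕ∞) ω V) {A : E → M}
    (hA : ∀ x ∈ V, HasFDerivAt A (-(ω x).flip (A x)) x) :
    ContDiffOn ℝ (⊤ : ℕ∞) A V := by
  refine contDiffOn_infty.2 fun k ↦ ?_
  induction k with
  | zero => exact contDiffOn_zero.2 fun x hx ↦ (hA x hx).continuousAt.continuousWithinAt
  | succ k ih =>
    push_cast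
    refine (contDiffOn_succ_iff_fderiv_of_isOpen hV).2
      ⟨fun x hx ↦ (hA x hx).differentiableAt.differentiableWithinAt, by simp, ?_⟩
    have hflip : ContDiffOn ℝ k (fun x ↦ (ω x).flip) V :=
      (ContinuousLinearMap.flipₗᵢ ℝ E M M).contDiff.comp_contDiffOn
        (hω.of_le (by exact_mod_cast le_top))
    exact (hflip.clm_apply ih).neg.congr fun x hx ↦ (hA x hx).fderiv

section Components

variable {ι : Type*} [Fintype ι]

/-- For a bilinear product `μ` on `M`, the connection form `v ↦ (B ↦ ∑ k, v k • μ (Γ k) B)`, as a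
linear function of the components `Γ`. -/
noncomputable def connectionForm (ι : Type*) [Fintype ι] (μ : M →L[ℝ] M →L[ℝ] M) :
    (ι → M) →L[ℝ] (ι → ℝ) →L[ℝ] M →L[ℝ] M :=
  ∑ k, (ContinuousLinearMap.smulRightL ℝ (ι → ℝ) (M →L[ℝ] M) (ContinuousLinearMap.proj k)).comp
    (μ.comp (ContinuousLinearMap.proj k))

lemma connectionForm_apply (μ : M →L[ℝ] M →L[ℝ] M) (Γ : ι → M) (v : ι → ℝ) (B : M) :
    connectionForm ι μ Γ v B = ∑ k, v k • μ (Γ k) B := by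
  simp [connectionForm]

variable [DecidableEq ι]

lemma connectionForm_single (μ : M →L[ℝ] M →L[ℝ] M) (Γ : ι → M) (k : ι) (B : M) :
    connectionForm ι μ Γ (Pi.single k 1) B = μ (Γ k) B := by
  simp [connectionForm_apply, Pi.single_apply]

/-- Flatness of the components `Γ`, with partial derivatives `D eₖ l = ∂ₖ Γₗ`, extends from the
basis vectors to all pairs of vectors. -/
lemma connectionForm_flat {μ : M →L[ℝ] M →L[ℝ] M} (hμ : ∀ a b c, μ (μ a b) c = μ a (μ b c))
    {Γ : ι → M} {D : (ι → ℝ) →L[ℝ] ι → M}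
    (hflat : ∀ k l,
      D (Pi.single k 1) l - D (Pi.single l 1) k + μ (Γ k) (Γ l) - μ (Γ l) (Γ k) = 0)
    (u v : ι → ℝ) :
    connectionForm ι μ (D u) v - connectionForm ι μ (D v) u
      + (connectionForm ι μ Γ u).comp (connectionForm ι μ Γ v)
      - (connectionForm ι μ Γ v).comp (connectionForm ι μ Γ u) = 0 := by
  have hD : ∀ u l, D u l = ∑ k, u k • D (Pi.single k 1) l := fun u l ↦ by
    conv_lhs => rw [pi_eq_sum_univ' u]
    simp [map_sum]
  ext B
  have hzero : ∑ k, ∑ l, (u k * v l) • μ (D (Pi.single k 1) l - D (Pi.single l 1) k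
      + μ (Γ k) (Γ l) - μ (Γ l) (Γ k)) B = 0 := by simp [hflat]
  rw [_root_.zero_apply, ← hzero]
  simp only [_root_.add_apply, _root_.sub_apply, ContinuousLinearMap.comp_apply,
    connectionForm_apply, hD u, hD v, map_add, map_sub, map_sum, map_smul, hμ, smul_add, smul_sub,
    Finset.sum_add_distrib, Finset.sum_sub_distrib, Finset.smul_sum, smul_smul, _root_.sum_apply,
    _root_.smul_apply]
  rw [Finset.sum_comm (f := fun l k ↦ (v l * u k) • μ (D (Pi.single k 1) l) B),
    Finset.sum_comm (f := fun l k ↦ (v l * u k) • μ (Γ k) (μ (Γ l) B))]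
  simp only [mul_comm (v _)]

/-- Local existence of parallel sections for flat component functions `Γ k`, acting through an
associative product `μ` on a finite dimensional space. -/
theorem exists_parallel_section_of_components [FiniteDimensional ℝ M] (μ : M →ₗ[ℝ] M →ₗ[ℝ] M)
    (hμ : ∀ a b c, μ (μ a b) c = μ a (μ b c)) {U : Set (ι → ℝ)} (hU : IsOpen U) {x₀ : ι → ℝ}
    (hx₀ : x₀ ∈ U) {Γ : ι → (ι → ℝ) → M} (hΓ : ∀ k, ContDiffOn ℝ (⊤ : ℕ∞) (Γ k) U)
    (hflat : ∀ k l, ∀ x ∈ U,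
      fderiv ℝ (Γ l) x (Pi.single k 1) - fderiv ℝ (Γ k) x (Pi.single l 1)
        + μ (Γ k x) (Γ l x) - μ (Γ l x) (Γ k x) = 0) (m : M) :
    ∃ V : Set (ι → ℝ), IsOpen V ∧ x₀ ∈ V ∧ V ⊆ U ∧
      ∃ A : (ι → ℝ) → M, A x₀ = m ∧ ContDiffOn ℝ (⊤ : ℕ∞) A V ∧
        ∀ x ∈ V, ∀ k, fderiv ℝ A x (Pi.single k 1) = -μ (Γ k x) (A x) := by
  have : CompleteSpace M := FiniteDimensional.complete ℝ M
  let μ' : M →L[ℝ] M →L[ℝ] M := μ.toContinuousBilinearMap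
  have hμ' : ∀ a b c, μ' (μ' a b) c = μ' a (μ' b c) := hμ
  have hω : ContDiffOn ℝ (⊤ : ℕ∞) (fun x ↦ connectionForm ι μ' (fun k ↦ Γ k x)) U :=
    (connectionForm ι μ').contDiff.comp_contDiffOn (contDiffOn_pi.2 hΓ)
  have hωflat : ∀ᶠ x in 𝓝 x₀, ∀ u v,
      fderiv ℝ (fun x ↦ connectionForm ι μ' (fun k ↦ Γ k x)) x u v
        - fderiv ℝ (fun x ↦ connectionForm ι μ' (fun k ↦ Γ k x)) x v u
        + (connectionForm ι μ' (fun k ↦ Γ k x) u).comp (connectionForm ι μ' (fun k ↦ Γ k x) v)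
        - (connectionForm ι μ' (fun k ↦ Γ k x) v).comp (connectionForm ι μ' (fun k ↦ Γ k x) u)
        = 0 := by
    filter_upwards [hU.mem_nhds hx₀] with x hx u v
    have hpi := hasFDerivAt_pi.2 fun k ↦
      (((hΓ k).contDiffAt (hU.mem_nhds hx)).differentiableAt (by simp)).hasFDerivAt
    have hcomp : HasFDerivAt (fun x ↦ connectionForm ι μ' (fun k ↦ Γ k x)) _ x :=
      (connectionForm ι μ').hasFDerivAt.comp x hpi
    rw [hcomp.fderiv]
    exact connectionForm_flat hμ' (fun k l ↦ hflat k l x hx) u v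
  obtain ⟨A, hA₀, hA⟩ := exists_parallel_section
    (contDiffAt_infty.1 (hω.contDiffAt (hU.mem_nhds hx₀)) 2) hωflat m
  obtain ⟨V, hV, hVo, hxV⟩ := _root_.eventually_nhds_iff.1 (hA.and (hU.mem_nhds hx₀))
  have hVU : V ⊆ U := fun x hx ↦ (hV x hx).2
  refine ⟨V, hVo, hxV, hVU, A, hA₀,
    contDiffOn_of_hasFDerivAt_parallel hVo (hω.mono hVU) fun x hx ↦ (hV x hx).1,
    fun x hx k ↦ ?_⟩
  rw [(hV x hx).1.fderiv]
  simp [connectionForm_single, μ']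

end Components

end ParallelTransport

/-- **Flat connections admit local parallel frames.**
If the connection component matrices `Γ k` are smooth on the open set `U` and curvature-free
there, then near any `x₀ ∈ U` there is a smooth invertible-matrix-valued map `A`
with `∂ₖ A = -(Γ k)·A`, i.e. a frame in which the components of the connection vanish. -/
theorem flat_connection_has_parallel_frame
    (n : ℕ) (hn : 1 ≤ n) (U : Set (Fin n → ℝ)) (hU : IsOpen U)
    (x₀ : Fin n → ℝ) (hx₀ : x₀ ∈ U)
    (Γ : Fin n → (Fin n → ℝ) → Matrix (Fin n) (Fin n) ℝ)
    (hΓ : ∀ k, ContDiffOn ℝ (⊤ : ℕ∞) (Γ k) U)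
    (hflat : ∀ k l, ∀ x ∈ U,
      fderiv ℝ (Γ l) x (Pi.single k 1) - fderiv ℝ (Γ k) x (Pi.single l 1)
        + Γ k x * Γ l x - Γ l x * Γ k x = 0) :
    ∃ V : Set (Fin n → ℝ), IsOpen V ∧ x₀ ∈ V ∧ V ⊆ U ∧
      ∃ A : (Fin n → ℝ) → Matrix (Fin n) (Fin n) ℝ,
        ContDiffOn ℝ (⊤ : ℕ∞) A V ∧ (∀ x ∈ V, IsUnit (A x)) ∧
        ∀ x ∈ V, ∀ k, fderiv ℝ A x (Pi.single k 1) = -(Γ k x * A x) := by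
  obtain ⟨V, hV, hxV, hVU, A, hA₀, hAV, hA⟩ := exists_parallel_section_of_components
    (LinearMap.mul ℝ (Matrix (Fin n) (Fin n) ℝ)) mul_assoc hU hx₀ hΓ hflat 1
  have hdet : ContinuousOn (fun x ↦ (A x).det) V :=
    continuous_id.matrix_det.comp_continuousOn hAV.continuousOn
  refine ⟨V ∩ (fun x ↦ (A x).det) ⁻¹' {0}ᶜ, hdet.isOpen_inter_preimage hV isOpen_compl_singleton,
    ⟨hxV, by simp [hA₀]⟩, Set.inter_subset_left.trans hVU, A, hAV.mono Set.inter_subset_left,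
    fun x hx ↦ (Matrix.isUnit_iff_isUnit_det _).2 (isUnit_iff_ne_zero.2 hx.2),
    fun x hx k ↦ hA x hx.1 k⟩
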